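/- Let A = [a_1, ..., a_n] ∈ ℝ^{m×n} with ‖a_i‖₂ = 1 for all i, and suppose 0 ∉ conv{a_1,...,a_n}, so that ρ(A) := max_{‖z‖₂=1} min_i ⟨a_i, z⟩ > 0. Then the von Neumann algorithm with away steps (as specified by the update rules: x_0 a vertex of Δ_{n−1}, y_k = A x_k, j minimizing ⟨a_i, y_k⟩, ℓ maximizing ⟨a_i, y_k⟩ over S(x_k), regular/away direction choice by comparing ⟨a_j − y_k, y_k⟩ and ⟨y_k − a_ℓ, y_k⟩, exact line search on [0, θ_max]) produces, within at most 8/ρ(A)² iterations, an index k with A^T y_k > 0 componentwise, certifying 0 ∉ conv(A). -/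

import Mathlib

open scoped RealInnerProductSpace BigOperators

/-- `comb a x = A x`, the combination `∑ i, x i • a i` of the columns `a i` of `A`. -/
noncomputable def comb {m n : ℕ} (a : Fin n → EuclideanSpace ℝ (Fin m)) (x : Fin n → ℝ) :
    EuclideanSpace ℝ (Fin m) := ∑ i, x i • a i

/-- The relative width
`w(A) = min_{x ≥ 0, Ax ≠ 0} max {⟪Ax, a ℓ - a j⟫ / ‖Ax‖ : ℓ ∈ S(x), j ∈ {1,…,n}}`. -/
noncomputable def relWidth {m n : ℕ} (a : Fin n → EuclideanSpace ℝ (Fin m)) : ℝ :=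
  sInf {t : ℝ | ∃ x : Fin n → ℝ, (∀ i, 0 ≤ x i) ∧ comb a x ≠ 0 ∧
    t = sSup {s : ℝ | ∃ ℓ j : Fin n, 0 < x ℓ ∧
      s = ⟪comb a x, a ℓ - a j⟫ / ‖comb a x‖}}

/-- One iteration of the von Neumann algorithm with away steps, mapping `x k` to `x (k+1)`:
`j` minimizes `⟪a i, y k⟫`, `ℓ` maximizes `⟪a i, y k⟫` over the support of `x k`; a regular
step (`d = a j - y k`, `u = e j - x k`, `θmax = 1`) is taken when
`⟪a j - y k, y k⟫ < ⟪y k - a ℓ, y k⟫`, otherwise an away step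
(`d = y k - a ℓ`, `u = x k - e ℓ`, `θmax = (x k) ℓ / (1 - (x k) ℓ)`);
`θ` minimizes `‖y k + θ • d‖` over `[0, θmax]` and `x (k+1) = x k + θ • u`. -/
def VNAwayStep {m n : ℕ} (a : Fin n → EuclideanSpace ℝ (Fin m))
    (x x' : Fin n → ℝ) (y : EuclideanSpace ℝ (Fin m)) : Prop :=
  ∃ (j ℓ : Fin n) (d : EuclideanSpace ℝ (Fin m)) (u : Fin n → ℝ) (θmax θ : ℝ),
    (∀ i, ⟪a j, y⟫ ≤ ⟪a i, y⟫) ∧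
    0 < x ℓ ∧ (∀ i, 0 < x i → ⟪a i, y⟫ ≤ ⟪a ℓ, y⟫) ∧
    ((⟪a j - y, y⟫ < ⟪y - a ℓ, y⟫ ∧
        d = a j - y ∧ u = Pi.single j 1 - x ∧ θmax = 1) ∨
     (¬ (⟪a j - y, y⟫ < ⟪y - a ℓ, y⟫) ∧
        d = y - a ℓ ∧ u = x - Pi.single ℓ 1 ∧ θmax = x ℓ / (1 - x ℓ))) ∧
    0 ≤ θ ∧ θ ≤ θmax ∧
    (∀ θ' : ℝ, 0 ≤ θ' → θ' ≤ θmax → ‖y + θ • d‖ ≤ ‖y + θ' • d‖) ∧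
    x' = x + θ • u



lemma quad_aux {m : ℕ} (y d : EuclideanSpace ℝ (Fin m)) (t : ℝ) :
    ‖y + t • d‖ ^ 2 = ‖y‖ ^ 2 + 2 * t * ⟪d, y⟫ + t ^ 2 * ‖d‖ ^ 2 := by
  rw [norm_add_sq_real, inner_smul_right, norm_smul, mul_pow, Real.norm_eq_abs, sq_abs,
    real_inner_comm]
  ring

lemma star_aux {m : ℕ} (y d : EuclideanSpace ℝ (Fin m)) (hd : ‖d‖ ≤ 2) (hd0 : 0 < ‖d‖)
    (hb : ⟪d, y⟫ ≤ -‖y‖ ^ 2) :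
    ‖y + (-⟪d, y⟫ / ‖d‖ ^ 2) • d‖ ^ 2 ≤ ‖y‖ ^ 2 - (‖y‖ ^ 2) ^ 2 / 4 := by
  rw [quad_aux]
  have hD : 0 < ‖d‖ ^ 2 := by positivity
  have hD4 : ‖d‖ ^ 2 ≤ 4 := by nlinarith
  have e : ‖y‖ ^ 2 + 2 * (-⟪d, y⟫ / ‖d‖ ^ 2) * ⟪d, y⟫ + (-⟪d, y⟫ / ‖d‖ ^ 2) ^ 2 * ‖d‖ ^ 2
      = ‖y‖ ^ 2 - ⟪d, y⟫ ^ 2 / ‖d‖ ^ 2 := by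
    field_simp
    ring
  rw [e]
  have h1 : (‖y‖ ^ 2) ^ 2 ≤ ⟪d, y⟫ ^ 2 := by nlinarith [sq_nonneg ‖y‖]
  have h2 : (‖y‖ ^ 2) ^ 2 / 4 ≤ ⟪d, y⟫ ^ 2 / ‖d‖ ^ 2 := by gcongr
  linarith

lemma comb_add_smul {m n : ℕ} (a : Fin n → EuclideanSpace ℝ (Fin m)) (x u : Fin n → ℝ) (t : ℝ) :
    comb a (x + t • u) = comb a x + t • comb a u := by
  simp [comb, add_smul, Finset.sum_add_distrib, Finset.smul_sum, mul_smul]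

lemma comb_sub' {m n : ℕ} (a : Fin n → EuclideanSpace ℝ (Fin m)) (x u : Fin n → ℝ) :
    comb a (x - u) = comb a x - comb a u := by
  simp [comb, sub_smul, Finset.sum_sub_distrib]

lemma comb_single' {m n : ℕ} (a : Fin n → EuclideanSpace ℝ (Fin m)) (j : Fin n) :
    comb a (Pi.single j 1) = a j := by
  simp [comb, Pi.single_apply]

lemma comb_inner_ge {m n : ℕ} (a : Fin n → EuclideanSpace ℝ (Fin m)) (x : Fin n → ℝ)
    (hx : ∀ i, 0 ≤ x i) (hs : ∑ i, x i = 1) (z : EuclideanSpace ℝ (Fin m)) (r : ℝ)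
    (h : ∀ i, r ≤ ⟪a i, z⟫) : r ≤ ⟪comb a x, z⟫ := by
  rw [comb, sum_inner]
  calc r = ∑ i, x i * r := by rw [← Finset.sum_mul, hs, one_mul]
    _ ≤ _ := Finset.sum_le_sum fun i _ => by
      rw [real_inner_smul_left]; exact mul_le_mul_of_nonneg_left (h i) (hx i)

lemma comb_norm_le {m n : ℕ} (a : Fin n → EuclideanSpace ℝ (Fin m)) (hnorm : ∀ i, ‖a i‖ = 1)
    (x : Fin n → ℝ) (hx : ∀ i, 0 ≤ x i) (hs : ∑ i, x i = 1) : ‖comb a x‖ ≤ 1 := by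
  rw [comb]
  refine (norm_sum_le _ _).trans ?_
  rw [← hs]
  refine Finset.sum_le_sum fun i _ => ?_
  rw [norm_smul, hnorm, mul_one, Real.norm_of_nonneg (hx i)]

noncomputable def suppC {n : ℕ} (x : Fin n → ℝ) : Finset (Fin n) :=
  Finset.univ.filter fun i => 0 < x i

lemma step_aux {m n : ℕ} (a : Fin n → EuclideanSpace ℝ (Fin m)) (hnorm : ∀ i, ‖a i‖ = 1)
    (x x' : Fin n → ℝ) (y : EuclideanSpace ℝ (Fin m)) (hy : y = comb a x)
    (hx : ∀ i, 0 ≤ x i) (hs : ∑ i, x i = 1) (hy0 : 0 < ‖y‖)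
    (hun : ∃ i, ⟪a i, y⟫ ≤ 0) (h : VNAwayStep a x x' y) :
    (∀ i, 0 ≤ x' i) ∧ ∑ i, x' i = 1 ∧
      (((suppC x').card ≤ (suppC x).card + 1 ∧
          ‖comb a x'‖ ^ 2 ≤ ‖y‖ ^ 2 - (‖y‖ ^ 2) ^ 2 / 4) ∨
        ((suppC x').card + 1 ≤ (suppC x).card ∧ ‖comb a x'‖ ^ 2 ≤ ‖y‖ ^ 2)) := by
  obtain ⟨j, l, d, u, tm, t, hj, hl, hlm, hcase, ht0, htm, hopt, rfl⟩ := h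
  have hy1 : ‖y‖ ≤ 1 := hy ▸ comb_norm_le a hnorm x hx hs
  have hj0 : ⟪a j, y⟫ ≤ 0 := by
    obtain ⟨i, hi⟩ := hun
    exact (hj i).trans hi
  have hyy : ⟪y, y⟫ = ‖y‖ ^ 2 := real_inner_self_eq_norm_sq y
  have hypos : 0 < ‖y‖ ^ 2 := by positivity
  rcases hcase with ⟨hc, rfl, rfl, rfl⟩ | ⟨hc, rfl, rfl, rfl⟩
  · have hb : ⟪a j - y, y⟫ ≤ -‖y‖ ^ 2 := by
      rw [inner_sub_left, hyy]; linarith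
    have hd2 : ‖a j - y‖ ≤ 2 := by
      refine (norm_sub_le _ _).trans ?_
      rw [hnorm]; linarith
    have hd0 : 0 < ‖a j - y‖ := by
      rw [norm_pos_iff]; intro h; rw [h, inner_zero_left] at hb; linarith
    have hD : 0 < ‖a j - y‖ ^ 2 := by positivity
    refine ⟨fun i => ?_, ?_, Or.inl ⟨?_, ?_⟩⟩
    · have h1 : (0:ℝ) ≤ (Pi.single j 1 : Fin n → ℝ) i := by
        rw [Pi.single_apply]; split_ifs <;> norm_num
      have := hx i
      simp only [Pi.add_apply, Pi.smul_apply, Pi.sub_apply, smul_eq_mul]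
      nlinarith
    · simp [Finset.sum_add_distrib, ← Finset.mul_sum, Finset.sum_sub_distrib, hs]
    · refine (Finset.card_le_card (t := insert j (suppC x)) ?_).trans (Finset.card_insert_le _ _)
      intro i hi
      simp only [suppC, Finset.mem_filter, Finset.mem_univ, true_and, Finset.mem_insert] at hi ⊢
      by_cases hij : i = j
      · exact Or.inl hij
      · right
        simp [hij] at hi
        by_contra hh
        have : x i = 0 := le_antisymm (not_lt.mp hh) (hx i)
        simp [this] at hi
    · rw [comb_add_smul, comb_sub', comb_single', ← hy]
      refine le_trans ?_ (star_aux y (a j - y) hd2 hd0 hb)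
      have := hopt (-⟪a j - y, y⟫ / ‖a j - y‖ ^ 2) (div_nonneg (by linarith) hD.le) (by
        rw [div_le_one hD, norm_sub_sq_real, inner_sub_left, hyy, hnorm]
        linarith)
      gcongr
  · have hb : ⟪y - a l, y⟫ ≤ -‖y‖ ^ 2 := by
      have : ⟪a j - y, y⟫ ≤ -‖y‖ ^ 2 := by
        rw [inner_sub_left, hyy]; linarith
      linarith
    have hd2 : ‖y - a l‖ ≤ 2 := by
      refine (norm_sub_le _ _).trans ?_
      rw [hnorm]; linarith
    have hd0 : 0 < ‖y - a l‖ := by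
      rw [norm_pos_iff]; intro h; rw [h, inner_zero_left] at hb; linarith
    have hD : 0 < ‖y - a l‖ ^ 2 := by positivity
    have hxl1 : x l ≤ 1 := hs ▸ Finset.single_le_sum (fun i _ => hx i) (Finset.mem_univ l)
    have hxl : x l < 1 := by
      refine lt_of_le_of_ne hxl1 fun hE => ?_
      have hz : ∀ i, i ≠ l → x i = 0 := by
        intro i hi
        have h2 := Finset.add_sum_erase Finset.univ x (Finset.mem_univ l)
        have h3 : ∑ i ∈ Finset.univ.erase l, x i = 0 := by linarith
        exact (Finset.sum_eq_zero_iff_of_nonneg fun i _ => hx i).1 h3 i (by simp [hi])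
      have : x = Pi.single l 1 := by
        ext i
        by_cases hi : i = l
        · subst hi; simp [hE]
        · simp [hi, hz i hi]
      rw [this, comb_single'] at hy
      rw [hy] at hd0
      simp at hd0
    have hpos : 0 < 1 - x l := by linarith
    have hnn : ∀ i, 0 ≤ (x + t • (x - Pi.single l 1) : Fin n → ℝ) i := by
      intro i
      have hi := hx i
      simp only [Pi.add_apply, Pi.smul_apply, Pi.sub_apply, smul_eq_mul]
      by_cases hil : i = l
      · subst hil
        rw [le_div_iff₀ hpos] at htm
        simp only [Pi.single_eq_same]
        linarith
      · simp only [Pi.single_eq_of_ne hil, sub_zero]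
        positivity
    have hsub : suppC (x + t • (x - Pi.single l 1)) ⊆ suppC x := by
      intro i hi
      simp only [suppC, Finset.mem_filter, Finset.mem_univ, true_and] at hi ⊢
      by_cases hil : i = l
      · exact hil ▸ hl
      · by_contra hh
        have : x i = 0 := le_antisymm (not_lt.mp hh) (hx i)
        simp [this, hil] at hi
    refine ⟨hnn, ?_, ?_⟩
    · simp [Finset.sum_add_distrib, ← Finset.mul_sum, Finset.sum_sub_distrib, hs]
    · rw [comb_add_smul, comb_sub', comb_single', ← hy]
      rcases le_or_gt (-⟪y - a l, y⟫ / ‖y - a l‖ ^ 2) (x l / (1 - x l)) with hle | hgt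
      · left
        refine ⟨(Finset.card_le_card hsub).trans (Nat.le_succ _), ?_⟩
        refine le_trans ?_ (star_aux y (y - a l) hd2 hd0 hb)
        have := hopt _ (div_nonneg (by linarith) hD.le) hle
        gcongr
      · right
        have hteq : t = x l / (1 - x l) := by
          refine le_antisymm htm (not_lt.mp fun hlt => ?_)
          have h1 := hopt _ (ht0.trans htm) le_rfl
          have h2 : ‖y + t • (y - a l)‖ ^ 2 ≤ ‖y + (x l / (1 - x l)) • (y - a l)‖ ^ 2 := by
            gcongr
          rw [quad_aux, quad_aux] at h2
          rw [lt_div_iff₀ hD] at hgt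
          set T := x l / (1 - x l)
          set D := ‖y - a l‖ ^ 2
          set b := ⟪y - a l, y⟫
          have h3 : (T - t) * (2 * b + (T + t) * D) < 0 := by
            apply mul_neg_of_pos_of_neg (by linarith)
            nlinarith
          nlinarith
        constructor
        · refine Finset.card_lt_card ⟨hsub, fun hh => ?_⟩
          have hm := hh (show l ∈ suppC x by simp [suppC, hl])
          simp only [suppC, Finset.mem_filter, Finset.mem_univ, true_and, Pi.add_apply,
            Pi.smul_apply, Pi.sub_apply, smul_eq_mul, Pi.single_eq_same] at hm
          have : t * (1 - x l) = x l := by rw [hteq]; field_simp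
          linarith
        · have := hopt 0 le_rfl (ht0.trans htm)
          rw [zero_smul, add_zero] at this
          gcongr

lemma rho_pos {m n : ℕ} (hn : 0 < n) (a : Fin n → EuclideanSpace ℝ (Fin m))
    (h0 : (0 : EuclideanSpace ℝ (Fin m)) ∉ convexHull ℝ (Set.range a)) :
    ∃ z : EuclideanSpace ℝ (Fin m), ‖z‖ = 1 ∧ 0 < ⨅ i : Fin n, ⟪a i, z⟫ := by
  have : Nonempty (Fin n) := ⟨⟨0, hn⟩⟩
  have hne : (convexHull ℝ (Set.range a)).Nonempty := (Set.range_nonempty a).convexHull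
  have hcp : IsCompact (convexHull ℝ (Set.range a)) := (Set.finite_range a).isCompact_convexHull ℝ
  obtain ⟨p, hp, hpe⟩ := exists_norm_eq_iInf_of_complete_convex hne hcp.isComplete
    (convex_convexHull ℝ _) 0
  have hin := (norm_eq_iInf_iff_real_inner_le_zero (convex_convexHull ℝ _) hp).1 hpe
  have hp0 : 0 < ‖p‖ := norm_pos_iff.2 fun h => h0 (h ▸ hp)
  refine ⟨‖p‖⁻¹ • p, ?_, ?_⟩
  · rw [norm_smul, norm_inv, norm_norm, inv_mul_cancel₀ hp0.ne']
  · obtain ⟨i, hi⟩ := exists_eq_ciInf_of_finite (f := fun i : Fin n => ⟪a i, ‖p‖⁻¹ • p⟫)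
    rw [← hi]
    have h1 := hin (a i) (subset_convexHull ℝ _ ⟨i, rfl⟩)
    rw [zero_sub, inner_neg_left, inner_sub_right, real_inner_self_eq_norm_sq,
      real_inner_comm] at h1
    simp only [inner_smul_right]
    have : 0 < ‖p‖ ^ 2 := by positivity
    exact mul_pos (inv_pos.2 hp0) (by linarith)

/-- if `0 ∉ conv(A)` (so that `ρ(A) > 0`), the von Neumann algorithm with
away steps finds, within at most `8/ρ(A)²` iterations, an iterate `y k` with
`Aᵀ y k > 0` componentwise, certifying `0 ∉ conv(A)`. -/
theorem stmt7 (m n : ℕ) (hn : 0 < n) (a : Fin n → EuclideanSpace ℝ (Fin m))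
    (hnorm : ∀ i, ‖a i‖ = 1)
    (h0 : (0 : EuclideanSpace ℝ (Fin m)) ∉ convexHull ℝ (Set.range a)) (ρ : ℝ)
    (hρ : IsGreatest
      {t : ℝ | ∃ z : EuclideanSpace ℝ (Fin m), ‖z‖ = 1 ∧ t = ⨅ i : Fin n, ⟪a i, z⟫} ρ)
    (x : ℕ → Fin n → ℝ) (y : ℕ → EuclideanSpace ℝ (Fin m))
    (hy : ∀ k, y k = comb a (x k))
    (hx0 : ∃ i : Fin n, x 0 = Pi.single i 1)
    (hstep : ∀ k : ℕ, VNAwayStep a (x k) (x (k + 1)) (y k)) :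
    ∃ k : ℕ, (k : ℝ) ≤ 8 / ρ ^ 2 ∧ ∀ i : Fin n, 0 < ⟪a i, y k⟫ := by
  have : Nonempty (Fin n) := ⟨⟨0, hn⟩⟩
  obtain ⟨z', hz', hz'pos⟩ := rho_pos hn a h0
  have hρ0 : 0 < ρ := lt_of_lt_of_le hz'pos (hρ.2 ⟨z', hz', rfl⟩)
  obtain ⟨z, hz, hρz⟩ := hρ.1
  have hzi : ∀ i, ρ ≤ ⟪a i, z⟫ := fun i => by
    rw [hρz]; exact ciInf_le (Set.finite_range _).bddBelow i
  have hlow : ∀ k, (∀ i, 0 ≤ x k i) → ∑ i, x k i = 1 → ρ ≤ ‖y k‖ := by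
    intro k h1 h2
    have h3 := comb_inner_ge a (x k) h1 h2 z ρ hzi
    rw [← hy] at h3
    have h4 := real_inner_le_norm (y k) z
    rw [hz, mul_one] at h4
    exact h3.trans h4
  by_contra hcon
  push Not at hcon
  have inv : ∀ k : ℕ, (∀ i < k, (i : ℝ) ≤ 8 / ρ ^ 2) →
      (∀ i, 0 ≤ x k i) ∧ ∑ i, x k i = 1 ∧
      ∃ N : ℕ, k + (suppC (x k)).card ≤ 2 * N + 1 ∧ ‖y k‖ ^ 2 * (1 + N / 4) ≤ 1 := by
    intro k
    induction k with
    | zero =>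
      intro _
      obtain ⟨i0, hi0⟩ := hx0
      refine ⟨fun i => ?_, ?_, 0, ?_, ?_⟩
      · rw [hi0, Pi.single_apply]; split_ifs <;> norm_num
      · rw [hi0]; simp
      · have : suppC (x 0) ⊆ {i0} := by
          intro i hi
          simp only [suppC, hi0, Finset.mem_filter, Finset.mem_univ, true_and] at hi
          by_contra hne
          rw [Finset.mem_singleton] at hne
          simp [hne] at hi
        have := Finset.card_le_card this
        simpa using this
      · rw [hy, hi0, comb_single', hnorm]; norm_num
    | succ k ih =>
      intro hk
      obtain ⟨h1, h2, N, h3, h4⟩ := ih fun i hi => hk i (by omega)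
      have hyρ := hlow k h1 h2
      have hy1 : ‖y k‖ ≤ 1 := by rw [hy]; exact comb_norm_le a hnorm _ h1 h2
      obtain ⟨g1, g2, g3⟩ := step_aux a hnorm (x k) (x (k + 1)) (y k) (hy k) h1 h2 (by linarith)
        (hcon k (hk k (by omega))) (hstep k)
      refine ⟨g1, g2, ?_⟩
      rw [← hy] at g3
      rcases g3 with ⟨c, hw⟩ | ⟨c, hw⟩
      · refine ⟨N + 1, by omega, ?_⟩
        push_cast
        have hw1 : ‖y k‖ ^ 2 ≤ 1 := by nlinarith [norm_nonneg (y k)]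
        have hw0 : 0 ≤ ‖y k‖ ^ 2 := by positivity
        set w := ‖y k‖ ^ 2
        set c' : ℝ := 1 + N / 4 with hc'
        have hc0 : 0 ≤ c' := by positivity
        calc ‖y (k + 1)‖ ^ 2 * (1 + ((N : ℝ) + 1) / 4)
            = ‖y (k + 1)‖ ^ 2 * (c' + 1 / 4) := by rw [hc']; ring
          _ ≤ (w - w ^ 2 / 4) * (c' + 1 / 4) := by gcongr
          _ = w * c' + (w / 4) * (1 - w * c') - w ^ 2 / 16 := by ring
          _ ≤ 1 := by nlinarith [sq_nonneg w]
      · refine ⟨N, by omega, le_trans ?_ h4⟩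
        gcongr
  have hfl : ∀ i < ⌊8 / ρ ^ 2⌋₊ + 1, (i : ℝ) ≤ 8 / ρ ^ 2 := fun i hi =>
    (Nat.le_floor_iff (by positivity)).1 (by omega)
  obtain ⟨h1, h2, N, h3, h4⟩ := inv _ hfl
  have hcard : 1 ≤ (suppC (x (⌊8 / ρ ^ 2⌋₊ + 1))).card := by
    rw [Nat.one_le_iff_ne_zero, Finset.card_ne_zero]
    by_contra hE
    rw [Finset.not_nonempty_iff_eq_empty] at hE
    have : ∑ i, x (⌊8 / ρ ^ 2⌋₊ + 1) i ≤ 0 := Finset.sum_nonpos fun i _ => by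
      by_contra hh
      have : i ∈ suppC (x (⌊8 / ρ ^ 2⌋₊ + 1)) := by simpa [suppC] using hh
      rw [hE] at this
      simp at this
    linarith
  have hρy := hlow _ h1 h2
  have hlt := Nat.lt_floor_add_one (8 / ρ ^ 2)
  have hN : ((⌊8 / ρ ^ 2⌋₊ + 1 : ℕ) : ℝ) ≤ 2 * N := by exact_mod_cast (by omega)
  push_cast at hN
  have h5 : ρ ^ 2 * (1 + N / 4) ≤ 1 := le_trans (by gcongr) h4
  have h6 : 8 / ρ ^ 2 < 2 * N := by linarith
  rw [div_lt_iff₀ (by positivity)] at h6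
  nlinarith [sq_nonneg ρ]
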